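/- Let n ≥ 1 and m ≥ 1 be integers, let 0 < α_i < n and 1 < p_i < n/α_i for i = 1,…,m, set α = α_1 + ⋯ + α_m, define q by 1/q = 1/p_1 + ⋯ + 1/p_m − α/n and assume 1/q < 1, and define q_i by 1/q_i = 1/p_i − α_i/n. Let φ_1,…,φ_m, ψ be positive measurable functions on ℝ^n × (0,∞) such that there is a constant C > 0, independent of x ∈ ℝ^n and r > 0, with ∏_{i=1}^m ∫_r^∞ (essinf_{t<s<∞} φ_i(x,s) s^{n/p_i}) t^{−n/q_i} (dt/t) ≤ C ψ(x,r). Then there exists a constant C' > 0 such that for all f_i ∈ 𝓛^{p_i,φ_i}(ℝ^n), i = 1,…,m, one has ‖I_{α,m}(f_1,…,f_m)‖_{𝓛^{q,ψ}(ℝ^n)} ≤ C' ∏_{i=1}^m ‖f_i‖_{𝓛^{p_i,φ_i}(ℝ^n)}. -/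

import Mathlib

/-!
The multilinear kernel is dominated by a product of linear ones: every distance is at most their
sum `D = ∑ |x - y_i|` and `α - mn = -∑ (n - α_i)`, so `D^{α - mn} ≤ ∏ |x - y_i|^{-(n - α_i)}`. By
Tonelli, `|I_{α,m}(f_1,…,f_m)|` is at most the product of the linear fractional integrals of the
`|f_i|` (`multIFrac_le`), and Hölder's inequality with `1/q = ∑ 1/q_i` (`holder_prod`) reduces the
claim to one `L^{q_i}` estimate over `B(x,r)` for each factor.

That estimate (`fracPot_local`) bounds the `L^{q_i}(B(x,r))` norm of the fractional integral of `F` by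
`r^{n/q_i} ∫_r^∞ t^{-n/q_i} ‖F‖_{L^{p_i}(B(x,t))} dt/t`. The part of `F` inside `B(x,2r)` is handled by
the Hardy–Littlewood–Sobolev inequality `hls`, which is proved through Hedberg's inequality and
the maximal theorem (Vitali covering, weak type `(1,1)`, strong type `(p,p)`). For the part outside
`B(x,2r)` the potential on `B(x,r)` is comparable with its value at `x`, which is written as an
integral over scales `t > r` and bounded by Hölder's inequality on balls.

Finally, `‖f_i‖_{L^{p_i}(B(x,t))}` increases with `t`, so it is at most a constant times the Morrey
norm times `φ_i(x,s) s^{n/p_i}` for every `s > t`, hence times the essential infimum over `s > t`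
(`lp_ball_le_essInf`). The hypothesis on `φ_i` and `ψ` then bounds the product of the integrals
over scales.
-/

open MeasureTheory Metric ENNReal

/-- The multilinear fractional integral operator `I_{α,m}` on `ℝⁿ`. -/
noncomputable def multIFrac (n m : ℕ) (α : ℝ)
    (f : Fin m → EuclideanSpace ℝ (Fin n) → ℝ) (x : EuclideanSpace ℝ (Fin n)) : ℝ :=
  ∫ y : Fin m → EuclideanSpace ℝ (Fin n),
    (∏ i, f i (y i)) * (∑ i, dist x (y i)) ^ (α - (m : ℝ) * (n : ℝ))

/-- The norm of the generalized Morrey space `𝓛^{p,φ}(ℝⁿ)`: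
`sup_{x, r>0} φ(x,r)⁻¹ (|B(x,r)|⁻¹ ∫_{B(x,r)} |f|^p)^{1/p}`. -/
noncomputable def morreyNorm {n : ℕ} (p : ℝ) (φ : EuclideanSpace ℝ (Fin n) → ℝ → ℝ)
    (f : EuclideanSpace ℝ (Fin n) → ℝ) : ℝ≥0∞ :=
  ⨆ (x : EuclideanSpace ℝ (Fin n)) (r : ℝ) (_ : 0 < r),
    ENNReal.ofReal ((φ x r)⁻¹) *
      ((volume (ball x r))⁻¹ * ∫⁻ y in ball x r, ENNReal.ofReal (|f y| ^ p)) ^ (1 / p)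

/-! ### Elementary integrals -/

/-- Tonelli for a product of functions of separate variables. -/
lemma lintegral_pi_prod {X : Type*} [MeasureSpace X] [SigmaFinite (volume : Measure X)] :
    ∀ (m : ℕ) (g : Fin m → X → ℝ≥0∞), (∀ i, Measurable (g i)) →
      ∫⁻ y : Fin m → X, ∏ i, g i (y i) = ∏ i, ∫⁻ y, g i y
  | 0, g, _ => by
      simp [volume_pi]
  | m + 1, g, hg => by
      have h := (measurePreserving_piFinSuccAbove (fun _ : Fin (m + 1) => (volume : Measure X)) 0).symm
      rw [volume_pi, ← h.lintegral_comp_emb (MeasurableEquiv.measurableEmbedding _)]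
      simp only [MeasurableEquiv.piFinSuccAbove_symm_apply, Fin.insertNthEquiv,
        Fin.prod_univ_succ, Fin.insertNth_zero, Equiv.coe_fn_mk, Fin.cons_succ,
        Fin.zero_succAbove, cast_eq, Fin.cons_zero]
      rw [← lintegral_pi_prod m (fun i => g i.succ) (fun i => hg _)]
      rw [volume_pi]
      exact lintegral_prod_mul (hg 0).aemeasurable
        (Finset.measurable_prod _ fun i _ => (hg (Fin.succ i)).comp (measurable_pi_apply i)).aemeasurable

/-- `∫_c^∞ t^{-s-1} dt = c^{-s}/s`, as a lower Lebesgue integral. -/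
lemma lintegral_Ioi_rpow {s c : ℝ} (hs : 0 < s) (hc : 0 < c) :
    ∫⁻ t in Set.Ioi c, ENNReal.ofReal (t ^ (-s - 1)) = ENNReal.ofReal (c ^ (-s) / s) := by
  rw [← ofReal_integral_eq_lintegral_ofReal (integrableOn_Ioi_rpow_of_lt (by linarith) hc),
    integral_Ioi_rpow_of_lt (by linarith) hc]
  · congr 1
    rw [sub_add_cancel, neg_div_neg_eq]
  · filter_upwards [self_mem_ae_restrict measurableSet_Ioi] with t ht
    exact Real.rpow_nonneg (hc.trans ht).le _

lemma lintegral_Ioc_rpow {s c : ℝ} (hs : 0 < s) (hc : 0 ≤ c) :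
    ∫⁻ t in Set.Ioc 0 c, ENNReal.ofReal (t ^ (s - 1)) = ENNReal.ofReal (c ^ s / s) := by
  have h1 : IntervalIntegrable (fun t : ℝ => t ^ (s - 1)) volume 0 c :=
    intervalIntegral.intervalIntegrable_rpow' (by linarith)
  rw [← ofReal_integral_eq_lintegral_ofReal
    ((intervalIntegrable_iff_integrableOn_Ioc_of_le hc).1 h1),
    ← intervalIntegral.integral_of_le hc, integral_rpow (Or.inl (by linarith))]
  · congr 1
    rw [sub_add_cancel, Real.zero_rpow hs.ne', sub_zero]
  · filter_upwards [self_mem_ae_restrict measurableSet_Ioc] with t ht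
    exact Real.rpow_nonneg ht.1.le _

/-- The half of the layer-cake formula `a^p = p ∫_0^a t^{p-1} dt` that is used for the maximal
function. The value `a = ∞` is allowed. -/
lemma rpow_le_layer {p : ℝ} (hp : 0 < p) (a : ℝ≥0∞) :
    a ^ p ≤ ENNReal.ofReal p * ∫⁻ t in Set.Ioi (0 : ℝ),
      (if ENNReal.ofReal t < a then ENNReal.ofReal (t ^ (p - 1)) else 0) := by
  have key : ∀ b : NNReal, (b : ℝ≥0∞) ≤ a → (b : ℝ≥0∞) ^ p ≤ ENNReal.ofReal p *
      ∫⁻ t in Set.Ioi (0 : ℝ),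
      (if ENNReal.ofReal t < a then ENNReal.ofReal (t ^ (p - 1)) else 0) := by
    intro b hb
    calc (b : ℝ≥0∞) ^ p = ENNReal.ofReal p * ENNReal.ofReal ((b : ℝ) ^ p / p) := by
          rw [← ENNReal.ofReal_mul hp.le, mul_div_cancel₀ _ hp.ne',
            ← ENNReal.ofReal_rpow_of_nonneg b.coe_nonneg hp.le, ENNReal.ofReal_coe_nnreal]
      _ = ENNReal.ofReal p * ∫⁻ t in Set.Ioo (0 : ℝ) b, ENNReal.ofReal (t ^ (p - 1)) := by
          rw [← lintegral_Ioc_rpow hp b.coe_nonneg, restrict_Ioo_eq_restrict_Ioc]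
      _ ≤ _ := by
          refine mul_le_mul' le_rfl ?_
          rw [← lintegral_indicator measurableSet_Ioo, ← lintegral_indicator measurableSet_Ioi]
          refine lintegral_mono fun t => ?_
          by_cases ht : t ∈ Set.Ioo (0 : ℝ) b
          · have h2 : ENNReal.ofReal t < a := by
              refine lt_of_lt_of_le ?_ hb
              rw [← ENNReal.ofReal_coe_nnreal]
              exact (ENNReal.ofReal_lt_ofReal_iff (ht.1.trans ht.2)).2 ht.2
            simp [ht, ht.1, h2]
          · simp [ht]
  induction a with
  | coe b => exact key b le_rfl
  | top =>
    rw [ENNReal.top_rpow_of_pos hp, top_le_iff]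
    refine ENNReal.eq_top_of_forall_nnreal_le fun r => ?_
    refine le_trans (le_of_eq ?_) (key (r ^ (1 / p)) le_top)
    rw [← ENNReal.coe_rpow_of_nonneg _ hp.le, ← NNReal.rpow_mul, one_div_mul_cancel hp.ne',
      NNReal.rpow_one]

/-- Bound for the inner integral arising when the layer-cake formula is combined with the
weak-type estimate. -/
lemma mul_layer_le {p : ℝ} (hp : 1 < p) (a : ℝ≥0∞) :
    a * ∫⁻ t in Set.Ioi (0 : ℝ),
      (if ENNReal.ofReal t < 2 * a then ENNReal.ofReal (t ^ (p - 1 - 1)) else 0) ≤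
    ENNReal.ofReal (2 ^ (p - 1) / (p - 1)) * a ^ p := by
  have hp1 : 0 < p - 1 := by linarith
  induction a with
  | top =>
    have h0 : ENNReal.ofReal (2 ^ (p - 1) / (p - 1)) ≠ 0 :=
      (ENNReal.ofReal_pos.2 (by positivity)).ne'
    rw [ENNReal.top_rpow_of_pos (by linarith : 0 < p), ENNReal.mul_top h0]
    exact le_top
  | coe b =>
    calc _ ≤ (b : ℝ≥0∞) * ∫⁻ t in Set.Ioc (0 : ℝ) (2 * b), ENNReal.ofReal (t ^ (p - 1 - 1)) := by
          refine mul_le_mul' le_rfl ?_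
          rw [← lintegral_indicator measurableSet_Ioc, ← lintegral_indicator measurableSet_Ioi]
          refine lintegral_mono fun t => ?_
          by_cases ht : 0 < t
          · by_cases h2 : ENNReal.ofReal t < 2 * b
            · have h3 : t ≤ 2 * b := by
                have : ENNReal.ofReal t < ENNReal.ofReal (2 * b) := by
                  rwa [ENNReal.ofReal_mul (by norm_num), ENNReal.ofReal_coe_nnreal,
                    ENNReal.ofReal_ofNat]
                exact (ENNReal.ofReal_lt_ofReal_iff_of_nonneg ht.le).1 this |>.le
              simp [ht, h3, h2]
            · simp [ht, h2]
          · simp [ht]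
      _ = ENNReal.ofReal (b * ((2 * b) ^ (p - 1) / (p - 1))) := by
          rw [lintegral_Ioc_rpow hp1 (by positivity), ENNReal.ofReal_mul b.coe_nonneg,
            ENNReal.ofReal_coe_nnreal]
      _ = ENNReal.ofReal (2 ^ (p - 1) / (p - 1) * (b : ℝ) ^ p) := by
          congr 1
          rw [Real.mul_rpow (by norm_num) b.coe_nonneg]
          have : (b : ℝ) ^ p = b * (b : ℝ) ^ (p - 1) := by
            nth_rw 2 [← Real.rpow_one (b : ℝ)]
            rw [← Real.rpow_add' b.coe_nonneg (by linarith)]; congr 1; ring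
          rw [this]; ring
      _ = _ := by
          rw [ENNReal.ofReal_mul (by positivity), ← ENNReal.ofReal_rpow_of_nonneg b.coe_nonneg (by linarith),
            ENNReal.ofReal_coe_nnreal]

/-! ### The Hardy–Littlewood maximal function -/

/-- Euclidean space of dimension `n`. -/
abbrev Eu (n : ℕ) := EuclideanSpace ℝ (Fin n)

/-- The centred Hardy–Littlewood maximal function of a nonnegative function. The supremum is taken
over rational radii only, which makes measurability immediate and changes the function at most by
a dimensional factor. -/
noncomputable def hlMax {n : ℕ} (F : Eu n → ℝ≥0∞) (x : Eu n) : ℝ≥0∞ :=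
  ⨆ r : {q : ℚ // 0 < q}, (volume (closedBall x (r : ℚ)))⁻¹ * ∫⁻ y in closedBall x (r : ℚ), F y

section Maximal

variable {n : ℕ}

lemma vol_closedBall (x : Eu n) {r : ℝ} (hr : 0 ≤ r) :
    volume (closedBall x r) = ENNReal.ofReal (r ^ n) * volume (ball (0 : Eu n) 1) := by
  rw [Measure.addHaar_closedBall _ _ hr, finrank_euclideanSpace_fin]

lemma vol_unit_ne_zero : volume (ball (0 : Eu n) 1) ≠ 0 :=
  (measure_ball_pos _ _ one_pos).ne'

lemma vol_unit_ne_top : volume (ball (0 : Eu n) 1) ≠ ⊤ := measure_ball_lt_top.ne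

lemma lintegral_closedBall_le_hlMax (F : Eu n → ℝ≥0∞) (x : Eu n) {r : ℚ} (hr : 0 < r) :
    ∫⁻ y in closedBall x (r : ℝ), F y ≤ volume (closedBall x (r : ℝ)) * hlMax F x := by
  have hr' : (0 : ℝ) < r := by exact_mod_cast hr
  have h1 : (volume (closedBall x (r : ℝ)))⁻¹ * ∫⁻ y in closedBall x (r : ℝ), F y ≤ hlMax F x :=
    le_iSup (fun r : {q : ℚ // 0 < q} => (volume (closedBall x (r : ℚ)))⁻¹ *
      ∫⁻ y in closedBall x (r : ℚ), F y) ⟨r, hr⟩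
  have h2 : volume (closedBall x (r : ℝ)) ≠ 0 := (measure_closedBall_pos _ _ hr').ne'
  have h3 : volume (closedBall x (r : ℝ)) ≠ ⊤ := measure_closedBall_lt_top.ne
  calc ∫⁻ y in closedBall x (r : ℝ), F y
      = volume (closedBall x (r : ℝ)) *
        ((volume (closedBall x (r : ℝ)))⁻¹ * ∫⁻ y in closedBall x (r : ℝ), F y) := by
        rw [← mul_assoc, ENNReal.mul_inv_cancel h2 h3, one_mul]
    _ ≤ _ := mul_le_mul' le_rfl h1

lemma measurable_hlMax {F : Eu n → ℝ≥0∞} (hF : Measurable F) : Measurable (hlMax F) := by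
  refine Measurable.iSup fun r => ?_
  have hr : (0 : ℝ) ≤ (r : ℚ) := by exact_mod_cast r.2.le
  simp_rw [vol_closedBall _ hr]
  refine Measurable.const_mul ?_ _
  have : ∀ x : Eu n, ∫⁻ y in closedBall x (r : ℚ), F y =
      ∫⁻ y, {z : Eu n × Eu n | dist z.2 z.1 ≤ (r : ℚ)}.indicator (fun z => F z.2) (x, y) := by
    intro x
    rw [← lintegral_indicator measurableSet_closedBall]
    rfl
  simp_rw [this]
  refine Measurable.lintegral_prod_right' ?_
  exact (hF.comp measurable_snd).indicator
    (measurableSet_le (measurable_snd.dist measurable_fst) measurable_const)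

lemma lintegral_ball_le_hlMax (F : Eu n → ℝ≥0∞) (x : Eu n) {t : ℝ} (ht : 0 < t) :
    ∫⁻ y in ball x t, F y ≤
      ENNReal.ofReal (2 ^ n * t ^ n) * volume (ball (0 : Eu n) 1) * hlMax F x := by
  obtain ⟨r, hr1, hr2⟩ := exists_rat_btwn (show t < 2 * t by linarith)
  have hr : (0 : ℝ) < r := ht.trans hr1
  calc ∫⁻ y in ball x t, F y ≤ ∫⁻ y in closedBall x (r : ℝ), F y :=
        lintegral_mono_set (ball_subset_closedBall.trans (closedBall_subset_closedBall hr1.le))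
    _ ≤ volume (closedBall x (r : ℝ)) * hlMax F x :=
        lintegral_closedBall_le_hlMax F x (by exact_mod_cast hr)
    _ ≤ _ := by
        rw [vol_closedBall x hr.le, ← mul_pow]
        gcongr

variable [NeZero n]

lemma vol_ball (x : Eu n) {r : ℝ} (hr : 0 ≤ r) :
    volume (ball x r) = ENNReal.ofReal (r ^ n) * volume (ball (0 : Eu n) 1) := by
  rw [Measure.addHaar_ball _ _ hr, finrank_euclideanSpace_fin]

/-- Weak type `(1,1)` of the maximal function, via the Vitali covering lemma. -/
lemma hlMax_weak (F : Eu n → ℝ≥0∞) {l : ℝ≥0∞} (hl : l ≠ 0) :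
    l * volume {x | l < hlMax F x} ≤ ENNReal.ofReal (5 ^ n) * ∫⁻ y, F y := by
  set v := volume (ball (0 : Eu n) 1) with hv
  have hv0 : v ≠ 0 := vol_unit_ne_zero
  have hvt : v ≠ ⊤ := vol_unit_ne_top
  by_cases hI : ∫⁻ y, F y = ⊤
  · rw [hI, ENNReal.mul_top (ENNReal.ofReal_pos.2 (by positivity)).ne']
    exact le_top
  by_cases hlt : l = ⊤
  · simp [hlt]
  set K := ((∫⁻ y, F y) / (l * v)).toReal with hK
  have hlv0 : l * v ≠ 0 := mul_ne_zero hl hv0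
  have hlvt : l * v ≠ ⊤ := ENNReal.mul_ne_top hlt hvt
  -- the balls with average at least `l`; their radii are bounded because `∫ F` is finite
  let T : Set (Eu n × ℝ) := {a | 0 < a.2 ∧
    l * volume (closedBall a.1 a.2) ≤ ∫⁻ y in closedBall a.1 a.2, F y}
  have hT : ∀ a ∈ T, a.2 ≤ max 1 K := by
    rintro ⟨x, r⟩ ⟨hr, ha⟩
    simp only at hr ha ⊢
    by_cases h1 : r ≤ 1
    · exact h1.trans (le_max_left _ _)
    refine le_trans ?_ (le_max_right _ _)
    have h2 : r ≤ r ^ n := le_self_pow₀ (by linarith) (NeZero.ne n)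
    refine h2.trans ?_
    rw [hK, ← ENNReal.ofReal_le_iff_le_toReal (ENNReal.div_lt_top hI hlv0).ne]
    rw [ENNReal.le_div_iff_mul_le (Or.inl hlv0) (Or.inl hlvt)]
    calc _ = l * volume (closedBall x r) := by rw [vol_closedBall x hr.le]; ring
      _ ≤ _ := ha.trans (setLIntegral_le_lintegral _ _)
  obtain ⟨u, huT, hdisj, hcov⟩ := Vitali.exists_disjoint_subfamily_covering_enlargement_closedBall
    T (fun a => a.1) (fun a => a.2) _ hT 5 (by norm_num)
  have hcount : u.Countable := by
    refine hdisj.countable_of_nonempty_interior fun a ha => ?_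
    exact ⟨a.1, ball_subset_interior_closedBall (mem_ball_self (huT ha).1)⟩
  have hsub : {x | l < hlMax F x} ⊆ ⋃ a ∈ u, closedBall a.1 (5 * a.2) := by
    intro x hx
    obtain ⟨r, hr⟩ := lt_iSup_iff.1 (show l < hlMax F x from hx)
    have hr0 : (0 : ℝ) < (r : ℚ) := by exact_mod_cast r.2
    have hxT : (x, ((r : ℚ) : ℝ)) ∈ T := by
      refine ⟨hr0, ?_⟩
      have h2 : volume (closedBall x ((r : ℚ) : ℝ)) ≠ 0 := (measure_closedBall_pos _ _ hr0).ne'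
      have h3 : volume (closedBall x ((r : ℚ) : ℝ)) ≠ ⊤ := measure_closedBall_lt_top.ne
      calc l * volume (closedBall x ((r : ℚ) : ℝ)) ≤ _ := mul_le_mul' hr.le le_rfl
        _ = ∫⁻ y in closedBall x ((r : ℚ) : ℝ), F y := by
          rw [mul_right_comm, ENNReal.inv_mul_cancel h2 h3, one_mul]
    obtain ⟨b, hb, hsb⟩ := hcov _ hxT
    exact Set.mem_biUnion hb (hsb (mem_closedBall_self hr0.le))
  have := hcount.to_subtype
  calc l * volume {x | l < hlMax F x}
      ≤ l * ∑' a : u, volume (closedBall a.1.1 (5 * a.1.2)) := by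
        refine mul_le_mul' le_rfl ((measure_mono hsub).trans ?_)
        exact measure_biUnion_le _ hcount _
    _ = ENNReal.ofReal (5 ^ n) * ∑' a : u, l * volume (closedBall a.1.1 a.1.2) := by
        rw [← ENNReal.tsum_mul_left, ← ENNReal.tsum_mul_left]
        refine tsum_congr fun a => ?_
        have h0 := (huT a.2).1
        rw [vol_closedBall _ h0.le, vol_closedBall _ (by positivity), mul_pow,
          ENNReal.ofReal_mul (by positivity)]
        ring
    _ ≤ ENNReal.ofReal (5 ^ n) * ∑' a : u, ∫⁻ y in closedBall a.1.1 a.1.2, F y :=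
        mul_le_mul' le_rfl (ENNReal.tsum_le_tsum fun a => (huT a.2).2)
    _ = ENNReal.ofReal (5 ^ n) * ∫⁻ y in ⋃ a ∈ u, closedBall a.1 a.2, F y := by
        rw [lintegral_biUnion hcount (fun a _ => measurableSet_closedBall) hdisj]
    _ ≤ _ := mul_le_mul' le_rfl (setLIntegral_le_lintegral _ _)

/-- Strong type `(p,p)` of the maximal function for `p > 1`: the weak-type bound, applied to the part
of `F` above height `t/2`, is integrated in `t` through the layer-cake formula. -/
lemma hlMax_strong {p : ℝ} (hp : 1 < p) : ∃ c : ℝ≥0∞, c ≠ ⊤ ∧ ∀ F : Eu n → ℝ≥0∞, Measurable F →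
    ∫⁻ x, hlMax F x ^ p ≤ c * ∫⁻ x, F x ^ p := by
  refine ⟨ENNReal.ofReal p * (2 * ENNReal.ofReal (5 ^ n)) *
    ENNReal.ofReal (2 ^ (p - 1) / (p - 1)), by finiteness, fun F hF => ?_⟩
  -- only the part of `F` above height `t/2` contributes to `{hlMax F > t}`
  have hlevel : ∀ t : ℝ, 0 < t → volume {x | ENNReal.ofReal t < hlMax F x} ≤
      2 * ENNReal.ofReal (5 ^ n) * ENNReal.ofReal (t⁻¹) *
        ∫⁻ y, (if ENNReal.ofReal t < 2 * F y then F y else 0) := by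
    intro t ht
    set G : Eu n → ℝ≥0∞ := fun y => if ENNReal.ofReal t < 2 * F y then F y else 0 with hG
    have hGm : Measurable G :=
      Measurable.ite (measurableSet_lt measurable_const (hF.const_mul 2)) hF measurable_const
    have hFG : ∀ y, F y ≤ G y + ENNReal.ofReal (t / 2) := by
      intro y
      by_cases h : ENNReal.ofReal t < 2 * F y
      · simp [hG, h]
      · simp only [hG, h, if_false, zero_add]
        rw [ENNReal.ofReal_div_of_pos (by norm_num), ENNReal.ofReal_ofNat,
          ENNReal.le_div_iff_mul_le (by simp) (by simp), mul_comm]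
        exact not_lt.1 h
    have hM : ∀ x, hlMax F x ≤ hlMax G x + ENNReal.ofReal (t / 2) := by
      intro x
      refine iSup_le fun r => ?_
      have hr0 : (0 : ℝ) < (r : ℚ) := by exact_mod_cast r.2
      have h2 : volume (closedBall x ((r : ℚ) : ℝ)) ≠ 0 := (measure_closedBall_pos _ _ hr0).ne'
      have h3 : volume (closedBall x ((r : ℚ) : ℝ)) ≠ ⊤ := measure_closedBall_lt_top.ne
      calc _ ≤ (volume (closedBall x ((r : ℚ) : ℝ)))⁻¹ *
            ∫⁻ y in closedBall x ((r : ℚ) : ℝ), (G y + ENNReal.ofReal (t / 2)) :=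
            mul_le_mul' le_rfl (lintegral_mono fun y => hFG y)
        _ = (volume (closedBall x ((r : ℚ) : ℝ)))⁻¹ * (∫⁻ y in closedBall x ((r : ℚ) : ℝ), G y)
            + ENNReal.ofReal (t / 2) := by
            rw [lintegral_add_left hGm, setLIntegral_const, mul_add]
            congr 1
            rw [mul_left_comm, ENNReal.inv_mul_cancel h2 h3, mul_one]
        _ ≤ _ := by
            gcongr
            exact le_iSup (fun r : {q : ℚ // 0 < q} => (volume (closedBall x (r : ℚ)))⁻¹ *
              ∫⁻ y in closedBall x (r : ℚ), G y) r
    have ht2 : ENNReal.ofReal (t / 2) ≠ 0 := (ENNReal.ofReal_pos.2 (by positivity)).ne'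
    have hsub : {x | ENNReal.ofReal t < hlMax F x} ⊆
        {x | ENNReal.ofReal (t / 2) < hlMax G x} := by
      intro x hx
      have h1 : ENNReal.ofReal (t / 2) + ENNReal.ofReal (t / 2) <
          hlMax G x + ENNReal.ofReal (t / 2) := by
        rw [← ENNReal.ofReal_add (by positivity) (by positivity), add_halves]
        exact lt_of_lt_of_le hx (hM x)
      exact lt_of_add_lt_add_right h1
    have hw := hlMax_weak G ht2
    calc volume {x | ENNReal.ofReal t < hlMax F x}
        ≤ volume {x | ENNReal.ofReal (t / 2) < hlMax G x} := measure_mono hsub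
      _ = ENNReal.ofReal (2 * t⁻¹) * (ENNReal.ofReal (t / 2) *
          volume {x | ENNReal.ofReal (t / 2) < hlMax G x}) := by
          rw [← mul_assoc, ← ENNReal.ofReal_mul (by positivity)]
          have : 2 * t⁻¹ * (t / 2) = 1 := by field_simp
          rw [this, ENNReal.ofReal_one, one_mul]
      _ ≤ ENNReal.ofReal (2 * t⁻¹) * (ENNReal.ofReal (5 ^ n) * ∫⁻ y, G y) :=
          mul_le_mul' le_rfl hw
      _ = _ := by
          rw [ENNReal.ofReal_mul (by norm_num), ENNReal.ofReal_ofNat]; ring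
  have hMm := measurable_hlMax hF
  have hof : Measurable fun z : Eu n × ℝ => ENNReal.ofReal z.2 :=
    ENNReal.measurable_ofReal.comp measurable_snd
  have hpow : ∀ e : ℝ, Measurable fun t : ℝ => ENNReal.ofReal (t ^ e) := fun e =>
    ENNReal.measurable_ofReal.comp (measurable_id.pow_const e)
  have hm1 : Measurable fun z : Eu n × ℝ =>
      (if ENNReal.ofReal z.2 < hlMax F z.1 then ENNReal.ofReal (z.2 ^ (p - 1)) else 0) :=
    Measurable.ite (measurableSet_lt hof (hMm.comp measurable_fst))
      ((hpow _).comp measurable_snd) measurable_const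
  have hm2 : Measurable fun z : Eu n × ℝ =>
      (if ENNReal.ofReal z.2 < 2 * F z.1 then ENNReal.ofReal (z.2 ^ (p - 1 - 1)) else 0) :=
    Measurable.ite (measurableSet_lt hof ((hF.comp measurable_fst).const_mul 2))
      ((hpow _).comp measurable_snd) measurable_const
  calc ∫⁻ x, hlMax F x ^ p
      ≤ ∫⁻ x, ENNReal.ofReal p * ∫⁻ t in Set.Ioi (0 : ℝ),
        (if ENNReal.ofReal t < hlMax F x then ENNReal.ofReal (t ^ (p - 1)) else 0) :=
        lintegral_mono fun x => rpow_le_layer (by linarith) _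
    _ = ENNReal.ofReal p * ∫⁻ t in Set.Ioi (0 : ℝ), ∫⁻ x,
        (if ENNReal.ofReal t < hlMax F x then ENNReal.ofReal (t ^ (p - 1)) else 0) := by
        rw [lintegral_const_mul _ hm1.lintegral_prod_right', lintegral_lintegral_swap hm1.aemeasurable]
    _ = ENNReal.ofReal p * ∫⁻ t in Set.Ioi (0 : ℝ),
        ENNReal.ofReal (t ^ (p - 1)) * volume {x | ENNReal.ofReal t < hlMax F x} := by
        congr 1
        refine lintegral_congr fun t => ?_
        have hs : MeasurableSet {x | ENNReal.ofReal t < hlMax F x} :=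
          measurableSet_lt measurable_const hMm
        rw [← setLIntegral_const, ← lintegral_indicator hs]
        refine lintegral_congr fun x => ?_
        simp [Set.indicator_apply]
    _ ≤ ENNReal.ofReal p * ∫⁻ t in Set.Ioi (0 : ℝ), 2 * ENNReal.ofReal (5 ^ n) *
        ∫⁻ y, F y *
          (if ENNReal.ofReal t < 2 * F y then ENNReal.ofReal (t ^ (p - 1 - 1)) else 0) := by
        refine mul_le_mul' le_rfl (setLIntegral_mono' measurableSet_Ioi fun t ht => ?_)
        have ht : 0 < t := ht
        calc _ ≤ ENNReal.ofReal (t ^ (p - 1)) * (2 * ENNReal.ofReal (5 ^ n) * ENNReal.ofReal (t⁻¹) *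
              ∫⁻ y, (if ENNReal.ofReal t < 2 * F y then F y else 0)) :=
              mul_le_mul' le_rfl (hlevel t ht)
          _ = 2 * ENNReal.ofReal (5 ^ n) * (ENNReal.ofReal (t ^ (p - 1 - 1)) *
              ∫⁻ y, (if ENNReal.ofReal t < 2 * F y then F y else 0)) := by
              rw [Real.rpow_sub_one ht.ne' (p - 1), div_eq_mul_inv, ENNReal.ofReal_mul (by positivity)]
              ring
          _ = _ := by
              rw [← lintegral_const_mul]
              · congr 1
                refine lintegral_congr fun y => ?_
                split_ifs <;> simp [mul_comm]
              · exact Measurable.ite (measurableSet_lt measurable_const (hF.const_mul 2)) hF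
                  measurable_const
    _ = ENNReal.ofReal p * (2 * ENNReal.ofReal (5 ^ n) * ∫⁻ y, F y * ∫⁻ t in Set.Ioi (0 : ℝ),
          (if ENNReal.ofReal t < 2 * F y then ENNReal.ofReal (t ^ (p - 1 - 1)) else 0)) := by
        have hm3 : Measurable fun z : Eu n × ℝ => F z.1 *
          (if ENNReal.ofReal z.2 < 2 * F z.1 then ENNReal.ofReal (z.2 ^ (p - 1 - 1)) else 0) :=
          (hF.comp measurable_fst).mul hm2
        rw [lintegral_const_mul _ hm3.lintegral_prod_left', ← lintegral_lintegral_swap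
          hm3.aemeasurable]
        congr 2
        refine lintegral_congr fun y => ?_
        exact lintegral_const_mul (F y) (hm2.comp (measurable_prodMk_left (x := y)))
    _ ≤ ENNReal.ofReal p * (2 * ENNReal.ofReal (5 ^ n) *
        ∫⁻ y, ENNReal.ofReal (2 ^ (p - 1) / (p - 1)) * F y ^ p) := by
        exact mul_le_mul' le_rfl (mul_le_mul' le_rfl (lintegral_mono fun y => mul_layer_le hp (F y)))
    _ = _ := by
        rw [lintegral_const_mul _ (hF.pow_const p)]; ring

end Maximal

/-! ### Linear fractional integrals -/

/-- The linear fractional integral of order `n - s` of a nonnegative function, with kernel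
`|x - y|^{-s}` (equal to `∞` on the diagonal when `s > 0`). -/
noncomputable def fracPot {n : ℕ} (s : ℝ) (F : Eu n → ℝ≥0∞) (x : Eu n) : ℝ≥0∞ :=
  ∫⁻ y, F y * edist x y ^ (-s)

section Potential

variable {n : ℕ}

lemma measurable_fracPot (s : ℝ) {F : Eu n → ℝ≥0∞} (hF : Measurable F) :
    Measurable (fracPot s F) := by
  have : Measurable fun z : Eu n × Eu n => F z.2 * edist z.1 z.2 ^ (-s) :=
    (hF.comp measurable_snd).mul (measurable_edist.pow_const _)
  exact this.lintegral_prod_right'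

lemma measurable_ofReal_rpow (e : ℝ) : Measurable fun t : ℝ => ENNReal.ofReal (t ^ e) :=
  ENNReal.measurable_ofReal.comp (measurable_id.pow_const e)

variable [NeZero n]

/-- Writing the kernel as `s ∫_{|x-y|}^∞ t^{-s-1} dt` expresses the potential through integrals
over balls. -/
lemma fracPot_le_layer {s : ℝ} (hs : 0 < s) {F : Eu n → ℝ≥0∞} (hF : Measurable F) (x : Eu n) :
    fracPot s F x ≤ ENNReal.ofReal s * ∫⁻ t in Set.Ioi (0 : ℝ),
      ENNReal.ofReal (t ^ (-s - 1)) * ∫⁻ y in ball x t, F y := by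
  have hk : ∀ y, y ≠ x → edist x y ^ (-s) = ENNReal.ofReal s * ∫⁻ t in Set.Ioi (0 : ℝ),
      (if dist y x < t then ENNReal.ofReal (t ^ (-s - 1)) else 0) := by
    intro y hy
    have hd : 0 < dist y x := dist_pos.2 hy
    have h1 : ∫⁻ t in Set.Ioi (0 : ℝ),
        (if dist y x < t then ENNReal.ofReal (t ^ (-s - 1)) else 0) =
        ∫⁻ t in Set.Ioi (dist y x), ENNReal.ofReal (t ^ (-s - 1)) := by
      rw [← lintegral_indicator measurableSet_Ioi, ← lintegral_indicator measurableSet_Ioi]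
      refine lintegral_congr fun t => ?_
      by_cases ht : dist y x < t
      · simp [ht, hd.trans ht]
      · simp [ht]
    rw [h1, lintegral_Ioi_rpow hs hd, ← ENNReal.ofReal_mul hs.le, mul_div_cancel₀ _ hs.ne',
      edist_comm, edist_dist, ENNReal.ofReal_rpow_of_pos hd]
  have hm : Measurable fun z : Eu n × ℝ => F z.1 *
      (if dist z.1 x < z.2 then ENNReal.ofReal (z.2 ^ (-s - 1)) else 0) :=
    (hF.comp measurable_fst).mul (Measurable.ite
      (measurableSet_lt (measurable_fst.dist measurable_const) measurable_snd)
      ((measurable_ofReal_rpow _).comp measurable_snd) measurable_const)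
  refine le_of_eq ?_
  calc fracPot s F x = ∫⁻ y, ENNReal.ofReal s * ∫⁻ t in Set.Ioi (0 : ℝ), F y *
        (if dist y x < t then ENNReal.ofReal (t ^ (-s - 1)) else 0) := by
        refine lintegral_congr_ae ?_
        have hae : ∀ᵐ y : Eu n, y ≠ x := by
          rw [ae_iff]; simp
        filter_upwards [hae] with y hy
        rw [hk y hy, lintegral_const_mul]
        · ring
        · exact Measurable.ite (measurableSet_lt measurable_const measurable_id)
            (measurable_ofReal_rpow _) measurable_const
    _ = ENNReal.ofReal s * ∫⁻ t in Set.Ioi (0 : ℝ), ∫⁻ y, F y *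
        (if dist y x < t then ENNReal.ofReal (t ^ (-s - 1)) else 0) := by
        rw [lintegral_const_mul _ hm.lintegral_prod_right', lintegral_lintegral_swap hm.aemeasurable]
    _ = _ := by
        congr 1
        refine lintegral_congr fun t => ?_
        rw [← lintegral_const_mul _ hF, ← lintegral_indicator measurableSet_ball]
        refine lintegral_congr fun y => ?_
        by_cases h : dist y x < t
        · simp [h, mem_ball, mul_comm]
        · simp [h, mem_ball]

/-- Hölder's inequality on a ball. -/
lemma lintegral_ball_le_Lp {p : ℝ} (hp : 1 < p) {F : Eu n → ℝ≥0∞} (hF : Measurable F) (x : Eu n)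
    {t : ℝ} (ht : 0 < t) :
    ∫⁻ y in ball x t, F y ≤ ENNReal.ofReal (t ^ ((n : ℝ) - n / p)) *
      volume (ball (0 : Eu n) 1) ^ (1 - 1 / p) * (∫⁻ y in ball x t, F y ^ p) ^ (1 / p) := by
  have hpq := Real.HolderConjugate.conjExponent hp
  have h := ENNReal.lintegral_mul_le_Lp_mul_Lq (volume.restrict (ball x t)) hpq
    hF.aemeasurable (aemeasurable_const (b := (1 : ℝ≥0∞)))
  have he : 1 / p.conjExponent = 1 - 1 / p := by
    rw [one_div, one_div, ← hpq.one_sub_inv]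
  have hp1 : 0 ≤ 1 - 1 / p := by
    rw [sub_nonneg, div_le_one (by linarith)]; exact hp.le
  simp only [Pi.mul_apply, mul_one, ENNReal.one_rpow, lintegral_const, one_mul,
    Measure.restrict_apply_univ, he] at h
  refine h.trans (le_of_eq ?_)
  rw [vol_ball x ht.le, ENNReal.mul_rpow_of_nonneg _ _ hp1, ENNReal.ofReal_rpow_of_pos (by positivity),
    ← Real.rpow_natCast, ← Real.rpow_mul ht.le, mul_comm]
  congr 4
  ring

/-- Hedberg's inequality with a free splitting radius `δ`: scales below `δ` are bounded by the maximal
function, scales above `δ` by Hölder's inequality. -/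
lemma hedberg {α p : ℝ} (hα : 0 < α) (hαn : α < n) (hp : 1 < p) (hpn : p < n / α) :
    ∃ c : ℝ≥0∞, c ≠ ⊤ ∧ ∀ F : Eu n → ℝ≥0∞, Measurable F → ∀ x : Eu n, ∀ δ : ℝ, 0 < δ →
      fracPot (n - α) F x ≤ c * (ENNReal.ofReal (δ ^ α) * hlMax F x +
        ENNReal.ofReal (δ ^ (α - n / p)) * (∫⁻ y, F y ^ p) ^ (1 / p)) := by
  set v := volume (ball (0 : Eu n) 1) with hv
  have hv0 : v ≠ 0 := vol_unit_ne_zero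
  have hvt : v ≠ ⊤ := vol_unit_ne_top
  have hp0 : 0 < p := by linarith
  have hnp : 0 < n / p - α := by
    rw [sub_pos, lt_div_iff₀ hp0]; rw [lt_div_iff₀ hα] at hpn; linarith
  have hp1 : 0 ≤ 1 - 1 / p := by
    rw [sub_nonneg, div_le_one (by linarith)]; exact hp.le
  set c1 := ENNReal.ofReal (2 ^ n) * v * ENNReal.ofReal (1 / α) with hc1
  set c2 := v ^ (1 - 1 / p) * ENNReal.ofReal (1 / (n / p - α)) with hc2
  have hc1t : c1 ≠ ⊤ := by finiteness
  have hc2t : c2 ≠ ⊤ := ENNReal.mul_ne_top (ENNReal.rpow_ne_top_of_nonneg hp1 hvt) (by finiteness)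
  refine ⟨ENNReal.ofReal (n - α) * (c1 + c2), by finiteness, fun F hF x δ hδ => ?_⟩
  set M := hlMax F x
  set N := (∫⁻ y, F y ^ p) ^ (1 / p)
  have hnear : ∫⁻ t in Set.Ioc (0 : ℝ) δ,
      ENNReal.ofReal (t ^ (-(n - α) - 1)) * ∫⁻ y in ball x t, F y ≤
      c1 * (ENNReal.ofReal (δ ^ α) * M) := by
    calc _ ≤ ∫⁻ t in Set.Ioc (0 : ℝ) δ, (ENNReal.ofReal (2 ^ n) * v * M) *
          ENNReal.ofReal (t ^ (α - 1)) := by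
          refine setLIntegral_mono' measurableSet_Ioc fun t ht => ?_
          refine (mul_le_mul' le_rfl (lintegral_ball_le_hlMax F x ht.1)).trans (le_of_eq ?_)
          have h1 : t ^ (α - 1) = t ^ (-((n : ℝ) - α) - 1) * t ^ n := by
            rw [← Real.rpow_natCast, ← Real.rpow_add ht.1]; congr 1; ring
          rw [h1, ENNReal.ofReal_mul (Real.rpow_nonneg ht.1.le _),
            ENNReal.ofReal_mul (by positivity)]
          ring
      _ = _ := by
          rw [lintegral_const_mul _ (measurable_ofReal_rpow _), lintegral_Ioc_rpow hα hδ.le,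
            div_eq_mul_one_div, ENNReal.ofReal_mul (by positivity)]
          ring
  have hfar : ∫⁻ t in Set.Ioi δ,
      ENNReal.ofReal (t ^ (-(n - α) - 1)) * ∫⁻ y in ball x t, F y ≤
      c2 * (ENNReal.ofReal (δ ^ (α - n / p)) * N) := by
    calc _ ≤ ∫⁻ t in Set.Ioi δ, (v ^ (1 - 1 / p) * N) *
          ENNReal.ofReal (t ^ (-(n / p - α) - 1)) := by
          refine setLIntegral_mono' measurableSet_Ioi fun t ht => ?_
          have ht0 : 0 < t := hδ.trans ht
          have hN : (∫⁻ y in ball x t, F y ^ p) ^ (1 / p) ≤ N :=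
            ENNReal.rpow_le_rpow (setLIntegral_le_lintegral _ _) (by positivity)
          refine (mul_le_mul' le_rfl ((lintegral_ball_le_Lp hp hF x ht0).trans
            (mul_le_mul' le_rfl hN))).trans (le_of_eq ?_)
          have h1 : t ^ (-(n / p - α) - 1) =
              t ^ (-((n : ℝ) - α) - 1) * t ^ ((n : ℝ) - n / p) := by
            rw [← Real.rpow_add ht0]; congr 1; ring
          rw [h1, ENNReal.ofReal_mul (by positivity)]
          ring
      _ = _ := by
          rw [lintegral_const_mul _ (measurable_ofReal_rpow _), lintegral_Ioi_rpow hnp hδ,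
            div_eq_mul_one_div (δ ^ _), ENNReal.ofReal_mul (by positivity), neg_sub]
          ring
  calc fracPot (n - α) F x ≤ _ := fracPot_le_layer (by linarith) hF x
    _ ≤ ENNReal.ofReal (n - α) * (c1 * (ENNReal.ofReal (δ ^ α) * M) +
        c2 * (ENNReal.ofReal (δ ^ (α - n / p)) * N)) := by
        refine mul_le_mul' le_rfl ?_
        rw [← Set.Ioc_union_Ioi_eq_Ioi hδ.le]
        exact (lintegral_union_le _ _ _).trans (add_le_add hnear hfar)
    _ ≤ _ := by
        rw [mul_assoc (ENNReal.ofReal _), mul_add (c1 + c2)]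
        exact mul_le_mul' le_rfl (add_le_add (mul_le_mul' le_self_add le_rfl)
          (mul_le_mul' le_add_self le_rfl))

/-- The Hardy–Littlewood–Sobolev inequality, from Hedberg's inequality with the optimal radius and
the strong type `(p,p)` of the maximal function. The degenerate values `0` and `∞` of the norm and of
the maximal function, for which no optimal radius exists, are treated separately. -/
lemma hls {α p q : ℝ} (hα : 0 < α) (hαn : α < n) (hp : 1 < p) (hpn : p < n / α)
    (hq : 1 / q = 1 / p - α / n) :
    ∃ c : ℝ≥0∞, c ≠ ⊤ ∧ ∀ F : Eu n → ℝ≥0∞, Measurable F →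
      ∫⁻ x, fracPot (n - α) F x ^ q ≤ c * (∫⁻ y, F y ^ p) ^ (q / p) := by
  obtain ⟨c, hc, hH⟩ := hedberg hα hαn hp hpn
  obtain ⟨c', hc', hM⟩ := hlMax_strong (n := n) hp
  have hn0 : (0 : ℝ) < n := hα.trans hαn
  have hp0 : 0 < p := by linarith
  have hq0 : 0 < q := by
    have : 0 < 1 / q := by
      rw [hq, sub_pos, div_lt_div_iff₀ hn0 hp0]; rw [lt_div_iff₀ hα] at hpn; linarith
    exact one_div_pos.1 this
  set θ := α * p / n with hθ
  have hqp : q * (1 - θ) = p := by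
    have : 1 - θ = p * (1 / q) := by rw [hq, hθ]; field_simp
    rw [this]; field_simp
  have hqθ : q * θ = q - p := by linarith
  have hθ0 : 0 < θ := by positivity
  have hqp0 : 0 < q - p := by rw [← hqθ]; positivity
  set b := (2 * (c + 1)) ^ q with hb
  have hbt : b ≠ ⊤ := ENNReal.rpow_ne_top_of_nonneg hq0.le (by finiteness)
  have hb0 : b ≠ 0 := (ENNReal.rpow_pos (by positivity) (by finiteness)).ne'
  refine ⟨b * (c' + 1), by finiteness, fun F hF => ?_⟩
  set A := ∫⁻ y, F y ^ p with hA
  by_cases hA0 : A = 0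
  · have hF0 : F =ᵐ[volume] 0 := by
      have := (lintegral_eq_zero_iff (hF.pow_const p)).1 hA0
      filter_upwards [this] with y hy
      simpa [ENNReal.rpow_eq_zero_iff, hp0, hp0.le, hp0.not_gt] using hy
    have h0 : ∀ x, fracPot (n - α) F x = 0 := by
      intro x
      unfold fracPot
      rw [lintegral_congr_ae (g := fun _ => 0), lintegral_zero]
      filter_upwards [hF0] with y hy
      simp [hy]
    simp [h0, hq0]
  by_cases hAt : A = ⊤
  · rw [hAt, ENNReal.top_rpow_of_pos (by positivity)]
    rw [ENNReal.mul_top (mul_ne_zero hb0 (by simp))]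
    exact le_top
  set N := A ^ (1 / p) with hN
  have hN0 : N ≠ 0 := (ENNReal.rpow_pos (pos_iff_ne_zero.2 hA0) hAt).ne'
  have hNt : N ≠ ⊤ := ENNReal.rpow_ne_top_of_nonneg (by positivity) hAt
  have hNq0 : N ^ (q - p) ≠ 0 := (ENNReal.rpow_pos (pos_iff_ne_zero.2 hN0) hNt).ne'
  have hpt : ∀ x, fracPot (n - α) F x ^ q ≤ b * N ^ (q - p) * hlMax F x ^ p := by
    intro x
    by_cases hM0 : hlMax F x = 0
    · have hb0 : ∀ t ∈ Set.Ioi (0 : ℝ),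
          ENNReal.ofReal (t ^ (-(n - α) - 1)) * ∫⁻ y in ball x t, F y = 0 := by
        intro t ht
        have := lintegral_ball_le_hlMax F x ht
        rw [hM0, mul_zero, nonpos_iff_eq_zero] at this
        rw [this, mul_zero]
      have h1 := fracPot_le_layer (by linarith : 0 < n - α) hF x
      rw [setLIntegral_congr_fun measurableSet_Ioi hb0, lintegral_zero, mul_zero,
        nonpos_iff_eq_zero] at h1
      rw [h1, ENNReal.zero_rpow_of_pos hq0]
      exact zero_le
    by_cases hMt : hlMax F x = ⊤
    · rw [hMt, ENNReal.top_rpow_of_pos hp0, ENNReal.mul_top (mul_ne_zero hb0 hNq0)]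
      exact le_top
    set M := hlMax F x with hMdef
    have hMr : 0 < M.toReal := ENNReal.toReal_pos hM0 hMt
    have hNr : 0 < N.toReal := ENNReal.toReal_pos hN0 hNt
    -- the radius balancing the two terms of Hedberg's inequality
    set δ := (N.toReal / M.toReal) ^ (p / n) with hδ
    have hδ0 : 0 < δ := by positivity
    have e1 : ENNReal.ofReal (δ ^ α) * M = N ^ θ * M ^ (1 - θ) := by
      have : δ ^ α = N.toReal ^ θ / M.toReal ^ θ := by
        rw [hδ, ← Real.rpow_mul (by positivity), ← Real.div_rpow hNr.le hMr.le]
        congr 1; rw [hθ]; ring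
      rw [this, ENNReal.ofReal_div_of_pos (by positivity), ← ENNReal.ofReal_rpow_of_pos hNr,
        ← ENNReal.ofReal_rpow_of_pos hMr, ENNReal.ofReal_toReal hNt, ENNReal.ofReal_toReal hMt,
        ENNReal.rpow_sub _ _ hM0 hMt, ENNReal.rpow_one, div_eq_mul_inv, div_eq_mul_inv]
      ring
    have e2 : ENNReal.ofReal (δ ^ (α - n / p)) * N = N ^ θ * M ^ (1 - θ) := by
      have : δ ^ (α - n / p) = M.toReal ^ (1 - θ) / N.toReal ^ (1 - θ) := by
        rw [hδ, ← Real.rpow_mul (by positivity), ← Real.div_rpow hMr.le hNr.le,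
          ← inv_div M.toReal, Real.inv_rpow (by positivity), ← Real.rpow_neg (by positivity)]
        congr 1; rw [hθ]; field_simp; ring
      rw [this, ENNReal.ofReal_div_of_pos (by positivity), ← ENNReal.ofReal_rpow_of_pos hNr,
        ← ENNReal.ofReal_rpow_of_pos hMr, ENNReal.ofReal_toReal hNt, ENNReal.ofReal_toReal hMt]
      have h3 : N = N ^ (1 - θ) * N ^ θ := by
        rw [← ENNReal.rpow_add _ _ hN0 hNt, sub_add_cancel, ENNReal.rpow_one]
      have h4 : N ^ (1 - θ) ≠ 0 := (ENNReal.rpow_pos (pos_iff_ne_zero.2 hN0) hNt).ne'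
      have h5 : N ^ (1 - θ) ≠ ⊤ := ENNReal.rpow_ne_top_of_ne_zero hN0 hNt
      calc M ^ (1 - θ) / N ^ (1 - θ) * N = M ^ (1 - θ) / N ^ (1 - θ) * (N ^ (1 - θ) * N ^ θ) := by
            rw [← h3]
        _ = M ^ (1 - θ) * ((N ^ (1 - θ))⁻¹ * N ^ (1 - θ)) * N ^ θ := by
            rw [div_eq_mul_inv]; ring
        _ = _ := by rw [ENNReal.inv_mul_cancel h4 h5]; ring
    have h := hH F hF x δ hδ0
    rw [← hN, ← hMdef, e1, e2] at h
    calc fracPot (n - α) F x ^ q ≤ ((2 * (c + 1)) * (N ^ θ * M ^ (1 - θ))) ^ q := by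
          refine ENNReal.rpow_le_rpow (h.trans ?_) hq0.le
          rw [← two_mul, ← mul_assoc, mul_comm c 2]
          gcongr
          exact le_self_add
      _ = _ := by
          rw [ENNReal.mul_rpow_of_nonneg (2 * (c + 1)) _ hq0.le,
            ENNReal.mul_rpow_of_nonneg (N ^ θ) _ hq0.le,
            ← ENNReal.rpow_mul N, ← ENNReal.rpow_mul M, mul_comm θ, mul_comm (1 - θ), hqp, hqθ,
            mul_assoc]
  calc ∫⁻ x, fracPot (n - α) F x ^ q ≤ ∫⁻ x, b * N ^ (q - p) * hlMax F x ^ p :=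
        lintegral_mono hpt
    _ = b * N ^ (q - p) * ∫⁻ x, hlMax F x ^ p :=
        lintegral_const_mul _ ((measurable_hlMax hF).pow_const p)
    _ ≤ b * N ^ (q - p) * ((c' + 1) * A) := by
        refine mul_le_mul' le_rfl ((hM F hF).trans ?_)
        exact mul_le_mul' le_self_add le_rfl
    _ = b * (c' + 1) * (N ^ (q - p) * A) := by ring
    _ = _ := by
        congr 1
        rw [hN, ← ENNReal.rpow_mul]
        nth_rw 2 [← ENNReal.rpow_one A]
        rw [← ENNReal.rpow_add _ _ hA0 hAt]
        congr 1; field_simp; ring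

/-- Local `L^p → L^q` estimate for the linear fractional integral: the part of `F` near the ball is
controlled by the Hardy–Littlewood–Sobolev inequality, and the kernel of the remaining part is
comparable, on the whole ball, with its value at the centre. -/
lemma fracPot_local {α p q : ℝ} (hα : 0 < α) (hαn : α < n) (hp : 1 < p) (hpn : p < n / α)
    (hq : 1 / q = 1 / p - α / n) (hq1 : 1 ≤ q) :
    ∃ c : ℝ≥0∞, c ≠ ⊤ ∧ ∀ F : Eu n → ℝ≥0∞, Measurable F → ∀ x : Eu n, ∀ r : ℝ, 0 < r →
      (∫⁻ z in ball x r, fracPot (n - α) F z ^ q) ^ (1 / q) ≤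
        c * (ENNReal.ofReal (r ^ (n / q)) * ∫⁻ t in Set.Ioi r,
          ENNReal.ofReal (t ^ (-(n / q) - 1)) * (∫⁻ y in ball x t, F y ^ p) ^ (1 / p)) := by
  obtain ⟨c, hc, hH⟩ := hls (n := n) hα hαn hp hpn hq
  set v := volume (ball (0 : Eu n) 1) with hv
  have hvt : v ≠ ⊤ := vol_unit_ne_top
  have hn0 : (0 : ℝ) < n := hα.trans hαn
  have hp0 : 0 < p := by linarith
  have hq0 : 0 < q := by linarith
  have hnq : 0 < n / q := by positivity
  have hs0 : 0 < n - α := by linarith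
  have hp1 : 0 ≤ 1 - 1 / p := by
    rw [sub_nonneg, div_le_one (by linarith)]; exact hp.le
  have hexp : n / q = n / p - α := by
    rw [div_eq_mul_one_div, hq]; field_simp
  set c1 := c ^ (1 / q) * ENNReal.ofReal (n / q * 2 ^ (n / q)) with hc1
  set c2 := ENNReal.ofReal (2 ^ (n - α)) * (ENNReal.ofReal (n - α) * v ^ (1 - 1 / p)) * v ^ (1 / q)
    with hc2
  have hc1t : c1 ≠ ⊤ :=
    ENNReal.mul_ne_top (ENNReal.rpow_ne_top_of_nonneg (by positivity) hc) (by finiteness)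
  have hc2t : c2 ≠ ⊤ := by
    have h1 : v ^ (1 - 1 / p) ≠ ⊤ := ENNReal.rpow_ne_top_of_nonneg hp1 hvt
    have h2 : v ^ (1 / q) ≠ ⊤ := ENNReal.rpow_ne_top_of_nonneg (by positivity) hvt
    finiteness
  refine ⟨c1 + c2, by finiteness, fun F hF x r hr => ?_⟩
  set G : ℝ → ℝ≥0∞ := fun t => (∫⁻ y in ball x t, F y ^ p) ^ (1 / p) with hG
  set T := ∫⁻ t in Set.Ioi r, ENNReal.ofReal (t ^ (-(n / q) - 1)) * G t with hT
  set F1 := (ball x (2 * r)).indicator F with hF1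
  set F2 := (ball x (2 * r))ᶜ.indicator F with hF2
  have hF1m : Measurable F1 := hF.indicator measurableSet_ball
  have hF2m : Measurable F2 := hF.indicator measurableSet_ball.compl
  have hsplit : ∀ z, fracPot (n - α) F z = (fracPot (n - α) F1 + fracPot (n - α) F2) z := by
    intro z
    simp only [Pi.add_apply, fracPot]
    have hm : Measurable fun y => F1 y * edist z y ^ (-(n - α)) :=
      hF1m.mul ((measurable_const.edist measurable_id).pow_const _)
    rw [← lintegral_add_left hm]
    refine lintegral_congr fun y => ?_
    rw [← add_mul, hF1, hF2, Set.indicator_self_add_compl_apply]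
  have hnear : (∫⁻ z in ball x r, fracPot (n - α) F1 z ^ q) ^ (1 / q) ≤
      c1 * (ENNReal.ofReal (r ^ (n / q)) * T) := by
    have h1 : ∫⁻ y, F1 y ^ p = ∫⁻ y in ball x (2 * r), F y ^ p := by
      rw [← lintegral_indicator measurableSet_ball]
      refine lintegral_congr fun y => ?_
      by_cases hy : y ∈ ball x (2 * r)
      · simp only [hF1, Set.indicator_of_mem hy]
      · simp only [hF1, Set.indicator_of_notMem hy, ENNReal.zero_rpow_of_pos hp0]
    have h2 : ENNReal.ofReal ((2 * r) ^ (-(n / q)) / (n / q)) * G (2 * r) ≤ T := by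
      rw [← lintegral_Ioi_rpow hnq (by positivity), ← lintegral_mul_const _
        (measurable_ofReal_rpow _)]
      refine le_trans ?_ (lintegral_mono_set (Set.Ioi_subset_Ioi (by linarith : r ≤ 2 * r)))
      refine setLIntegral_mono' measurableSet_Ioi fun t ht => mul_le_mul' le_rfl ?_
      exact ENNReal.rpow_le_rpow (lintegral_mono_set (ball_subset_ball (le_of_lt ht)))
        (by positivity)
    have h3 : G (2 * r) = ENNReal.ofReal (n / q * 2 ^ (n / q)) * ENNReal.ofReal (r ^ (n / q)) *
        (ENNReal.ofReal ((2 * r) ^ (-(n / q)) / (n / q)) * G (2 * r)) := by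
      rw [← mul_assoc, ← ENNReal.ofReal_mul (by positivity), ← ENNReal.ofReal_mul (by positivity)]
      have : n / q * 2 ^ (n / q) * r ^ (n / q) * ((2 * r) ^ (-(n / q)) / (n / q)) = 1 := by
        rw [Real.rpow_neg (by positivity), Real.mul_rpow (by norm_num) hr.le]
        have : (2 : ℝ) ^ (n / q) ≠ 0 := by positivity
        have : r ^ (n / q) ≠ 0 := by positivity
        field_simp
      rw [this, ENNReal.ofReal_one, one_mul]
    calc _ ≤ (∫⁻ z, fracPot (n - α) F1 z ^ q) ^ (1 / q) :=
          ENNReal.rpow_le_rpow (setLIntegral_le_lintegral _ _) (by positivity)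
      _ ≤ (c * (∫⁻ y, F1 y ^ p) ^ (q / p)) ^ (1 / q) :=
          ENNReal.rpow_le_rpow (hH F1 hF1m) (by positivity)
      _ = c ^ (1 / q) * G (2 * r) := by
          rw [ENNReal.mul_rpow_of_nonneg _ _ (by positivity), ← ENNReal.rpow_mul, h1]
          have : q / p * (1 / q) = 1 / p := by field_simp
          rw [this]
      _ ≤ c ^ (1 / q) * (ENNReal.ofReal (n / q * 2 ^ (n / q)) * ENNReal.ofReal (r ^ (n / q)) *
        T) := by
          rw [h3]
          exact mul_le_mul' le_rfl (mul_le_mul' le_rfl h2)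
      _ = _ := by rw [hc1]; ring
  have hcentre : fracPot (n - α) F2 x ≤ ENNReal.ofReal (n - α) * v ^ (1 - 1 / p) * T := by
    refine (fracPot_le_layer hs0 hF2m x).trans ?_
    rw [mul_assoc]
    refine mul_le_mul' le_rfl ?_
    have hvT : v ^ (1 - 1 / p) * T = ∫⁻ t in Set.Ioi r, v ^ (1 - 1 / p) *
        (ENNReal.ofReal (t ^ (-(n / q) - 1)) * G t) :=
      (lintegral_const_mul' _ _ (ENNReal.rpow_ne_top_of_nonneg hp1 hvt)).symm
    rw [hvT, ← lintegral_indicator measurableSet_Ioi, ← lintegral_indicator measurableSet_Ioi]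
    refine lintegral_mono fun t => ?_
    by_cases ht : r < t
    · have ht0 : 0 < t := hr.trans ht
      rw [Set.indicator_of_mem (show t ∈ Set.Ioi 0 from ht0),
        Set.indicator_of_mem (show t ∈ Set.Ioi r from ht)]
      calc _ ≤ ENNReal.ofReal (t ^ (-(n - α) - 1)) * ∫⁻ y in ball x t, F y :=
            mul_le_mul' le_rfl (lintegral_mono fun y => Set.indicator_le_self _ _ _)
        _ ≤ _ := mul_le_mul' le_rfl (lintegral_ball_le_Lp hp hF x ht0)
        _ = _ := by
            have h1 : t ^ (-(n / q) - 1) = t ^ (-(n - α) - 1) * t ^ (n - n / p) := by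
              rw [← Real.rpow_add ht0, hexp]; congr 1; ring
            rw [h1, ENNReal.ofReal_mul (by positivity)]
            ring
    · have h0 : ∫⁻ y in ball x t, F2 y = 0 := by
        rw [setLIntegral_congr_fun (g := fun _ => 0) measurableSet_ball, lintegral_zero]
        intro y hy
        refine Set.indicator_of_notMem ?_ _
        rw [Set.notMem_compl_iff]
        exact ball_subset_ball (by linarith) hy
      rw [Set.indicator_of_notMem (show t ∉ Set.Ioi r from ht)]
      by_cases ht0 : t ∈ Set.Ioi (0 : ℝ)
      · rw [Set.indicator_of_mem ht0, h0, mul_zero]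
      · rw [Set.indicator_of_notMem ht0]
  have hfar : (∫⁻ z in ball x r, fracPot (n - α) F2 z ^ q) ^ (1 / q) ≤
      c2 * (ENNReal.ofReal (r ^ (n / q)) * T) := by
    have hz : ∀ z ∈ ball x r, fracPot (n - α) F2 z ≤
        ENNReal.ofReal (2 ^ (n - α)) * fracPot (n - α) F2 x := by
      intro z hz
      unfold fracPot
      have hm : Measurable fun y => F2 y * edist x y ^ (-(n - α)) :=
        hF2m.mul ((measurable_const.edist measurable_id).pow_const _)
      rw [← lintegral_const_mul _ hm]
      refine lintegral_mono fun y => ?_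
      by_cases hy : y ∈ ball x (2 * r)
      · have : F2 y = 0 := Set.indicator_of_notMem (by simpa using hy) _
        simp [this]
      · rw [mul_left_comm]
        refine mul_le_mul' le_rfl ?_
        have hxy : 2 * r ≤ dist x y := by rw [dist_comm]; simpa using hy
        have hzx : dist x z < r := by rw [dist_comm]; exact hz
        have hd : dist x y / 2 ≤ dist z y := by linarith [dist_triangle x z y]
        have hpos : 0 < dist x y / 2 := by linarith
        rw [edist_dist, edist_dist, ENNReal.ofReal_rpow_of_pos (by linarith),
          ENNReal.ofReal_rpow_of_pos (by linarith), ← ENNReal.ofReal_mul (by positivity)]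
        refine ENNReal.ofReal_le_ofReal ?_
        calc dist z y ^ (-(n - α)) ≤ (dist x y / 2) ^ (-(n - α)) :=
              Real.rpow_le_rpow_of_nonpos hpos hd (by linarith)
          _ = _ := by
              rw [Real.div_rpow dist_nonneg (by norm_num), Real.rpow_neg (by norm_num : (0 : ℝ) ≤ 2)]
              field_simp
    calc _ ≤ (∫⁻ z in ball x r, (ENNReal.ofReal (2 ^ (n - α)) * fracPot (n - α) F2 x) ^ q)
          ^ (1 / q) := by
          refine ENNReal.rpow_le_rpow ?_ (by positivity)
          exact setLIntegral_mono' measurableSet_ball fun z h => ENNReal.rpow_le_rpow (hz z h) hq0.le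
      _ = ENNReal.ofReal (2 ^ (n - α)) * fracPot (n - α) F2 x *
          (ENNReal.ofReal (r ^ (n / q)) * v ^ (1 / q)) := by
          rw [setLIntegral_const, ENNReal.mul_rpow_of_nonneg _ _ (by positivity), ← ENNReal.rpow_mul,
            mul_one_div_cancel hq0.ne', ENNReal.rpow_one, vol_ball x hr.le,
            ENNReal.mul_rpow_of_nonneg _ _ (by positivity), ENNReal.ofReal_rpow_of_pos (by positivity),
            ← Real.rpow_natCast, ← Real.rpow_mul hr.le, mul_one_div]
      _ ≤ ENNReal.ofReal (2 ^ (n - α)) * (ENNReal.ofReal (n - α) * v ^ (1 - 1 / p) * T) *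
          (ENNReal.ofReal (r ^ (n / q)) * v ^ (1 / q)) := by
          gcongr
      _ = _ := by rw [hc2]; ring
  simp_rw [hsplit]
  calc _ ≤ _ := ENNReal.lintegral_Lp_add_le (measurable_fracPot _ hF1m).aemeasurable
        (measurable_fracPot _ hF2m).aemeasurable hq1
    _ ≤ _ := add_le_add hnear hfar
    _ = _ := by rw [add_mul]

end Potential

/-! ### The multilinear operator on Morrey spaces -/

section Assembly

variable {n : ℕ}

/-- Membership in the Morrey space controls `L^p` norms over balls. Since these norms increase with
the radius, the bound at every radius `s > t` applies at `t`, whence the essential infimum. -/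
lemma lp_ball_le_essInf [NeZero n] {p : ℝ} (hp : 0 < p) {φ : Eu n → ℝ → ℝ}
    (hφ : ∀ x r, 0 < r → 0 < φ x r) {f : Eu n → ℝ} (hM : morreyNorm p φ f ≠ ⊤) (x : Eu n) {t : ℝ}
    (ht : 0 < t) :
    (∫⁻ y in ball x t, ENNReal.ofReal |f y| ^ p) ^ (1 / p) ≤
      (volume (ball (0 : Eu n) 1) ^ (1 / p) * morreyNorm p φ f) * ENNReal.ofReal
        (essInf (fun s => φ x s * s ^ ((n : ℝ) / p)) (volume.restrict (Set.Ioi t))) := by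
  set v := volume (ball (0 : Eu n) 1) with hv
  have hvt : v ≠ ⊤ := vol_unit_ne_top
  set M := morreyNorm p φ f with hMdef
  set A := v ^ (1 / p) * M with hA
  have hAt : A ≠ ⊤ := ENNReal.mul_ne_top (ENNReal.rpow_ne_top_of_nonneg (by positivity) hvt) hM
  set h : ℝ → ℝ := fun s => φ x s * s ^ ((n : ℝ) / p) with hh
  have hconv : ∀ y, ENNReal.ofReal |f y| ^ p = ENNReal.ofReal (|f y| ^ p) := fun y =>
    ENNReal.ofReal_rpow_of_nonneg (abs_nonneg _) hp.le
  have hball : ∀ s, 0 < s →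
      (∫⁻ y in ball x s, ENNReal.ofReal |f y| ^ p) ^ (1 / p) ≤ A * ENNReal.ofReal (h s) := by
    intro s hs
    simp_rw [hconv]
    set I := ∫⁻ y in ball x s, ENNReal.ofReal (|f y| ^ p)
    have hV0 : volume (ball x s) ≠ 0 := (measure_ball_pos _ _ hs).ne'
    have hVt : volume (ball x s) ≠ ⊤ := measure_ball_lt_top.ne
    have h1 : ENNReal.ofReal ((φ x s)⁻¹) * ((volume (ball x s))⁻¹ * I) ^ (1 / p) ≤ M :=
      le_iSup_of_le x (le_iSup_of_le s (le_iSup_of_le hs le_rfl))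
    have h2 : ((volume (ball x s))⁻¹ * I) ^ (1 / p) ≤ ENNReal.ofReal (φ x s) * M := by
      calc ((volume (ball x s))⁻¹ * I) ^ (1 / p)
          = ENNReal.ofReal (φ x s) *
            (ENNReal.ofReal ((φ x s)⁻¹) * ((volume (ball x s))⁻¹ * I) ^ (1 / p)) := by
            rw [← mul_assoc, ← ENNReal.ofReal_mul (hφ x s hs).le,
              mul_inv_cancel₀ (hφ x s hs).ne', ENNReal.ofReal_one, one_mul]
        _ ≤ _ := mul_le_mul' le_rfl h1
    have h3 : volume (ball x s) ^ (1 / p) = ENNReal.ofReal (s ^ ((n : ℝ) / p)) * v ^ (1 / p) := by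
      rw [vol_ball x hs.le, ENNReal.mul_rpow_of_nonneg _ _ (by positivity),
        ENNReal.ofReal_rpow_of_pos (by positivity), ← Real.rpow_natCast, ← Real.rpow_mul hs.le,
        mul_one_div]
    calc I ^ (1 / p) = (volume (ball x s) * ((volume (ball x s))⁻¹ * I)) ^ (1 / p) := by
          rw [← mul_assoc, ENNReal.mul_inv_cancel hV0 hVt, one_mul]
      _ = volume (ball x s) ^ (1 / p) * ((volume (ball x s))⁻¹ * I) ^ (1 / p) :=
          ENNReal.mul_rpow_of_nonneg _ _ (by positivity)
      _ ≤ (ENNReal.ofReal (s ^ ((n : ℝ) / p)) * v ^ (1 / p)) * (ENNReal.ofReal (φ x s) * M) := by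
          rw [h3]; exact mul_le_mul' le_rfl h2
      _ = _ := by
          rw [hA, hh, ENNReal.ofReal_mul (hφ x s hs).le]; ring
  set G := (∫⁻ y in ball x t, ENNReal.ofReal |f y| ^ p) ^ (1 / p) with hG
  have hGs : ∀ s, t < s → G ≤ A * ENNReal.ofReal (h s) := fun s hs =>
    (ENNReal.rpow_le_rpow (lintegral_mono_set (ball_subset_ball hs.le)) (by positivity)).trans
      (hball s (ht.trans hs))
  have hpos : ∀ s, t < s → 0 < h s := fun s hs =>
    mul_pos (hφ x s (ht.trans hs)) (Real.rpow_pos_of_pos (ht.trans hs) _)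
  by_cases hA0 : A = 0
  · have := hGs (t + 1) (by linarith)
    rw [hA0, zero_mul] at this ⊢
    exact this
  have hGt : G ≠ ⊤ := ne_top_of_le_ne_top (ENNReal.mul_ne_top hAt ENNReal.ofReal_ne_top)
    (hGs (t + 1) (by linarith))
  have hle : (G / A).toReal ≤ essInf h (volume.restrict (Set.Ioi t)) := by
    refine le_essInf_of_ae_le _ ?_ ?_
    · refine (ae_restrict_iff' measurableSet_Ioi).2 (Filter.Eventually.of_forall fun s hs => ?_)
      refine ENNReal.toReal_le_of_le_ofReal (hpos s hs).le ?_
      exact ENNReal.div_le_of_le_mul' (hGs s hs)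
    · -- `h` is real valued on a set of positive measure, so it is not essentially `+∞` there;
      -- this makes the real-valued essential infimum meaningful.
      have : (ae (volume.restrict (Set.Ioi t))).NeBot := by
        rw [ae_neBot, ne_eq, Measure.restrict_eq_zero, Real.volume_Ioi]
        exact ENNReal.top_ne_zero
      by_contra hcob
      have hb : ∀ b : ℝ, ∀ᵐ s ∂(volume.restrict (Set.Ioi t)), b ≤ h s := by
        intro b
        by_contra hb
        apply hcob
        refine ⟨b, fun a ha => ?_⟩
        by_contra hab
        apply hb
        have ha' : ∀ᵐ s ∂(volume.restrict (Set.Ioi t)), a ≤ h s := ha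
        filter_upwards [ha'] with s hs
        exact (not_le.1 hab).le.trans hs
      have hall : ∀ᵐ s ∂(volume.restrict (Set.Ioi t)), ∀ k : ℕ, (k : ℝ) ≤ h s :=
        ae_all_iff.2 fun k => hb k
      obtain ⟨s, hs⟩ := hall.exists
      obtain ⟨k, hk⟩ := exists_nat_gt (h s)
      exact absurd (hs k) (not_le.2 hk)
  have hfin : G / A ≠ ⊤ := ENNReal.div_ne_top hGt hA0
  calc G = A * (G / A) := (ENNReal.mul_div_cancel hA0 hAt).symm
    _ = A * ENNReal.ofReal (G / A).toReal := by rw [ENNReal.ofReal_toReal hfin]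
    _ ≤ _ := mul_le_mul' le_rfl (ENNReal.ofReal_le_ofReal hle)

/-- The multilinear kernel is dominated by a product of linear ones, because each distance is at
most their sum. -/
lemma kernel_le {m : ℕ} (hm : 1 ≤ m) {α : Fin m → ℝ} (hα : ∀ i, α i < n) (x : Eu n)
    (y : Fin m → Eu n) :
    ENNReal.ofReal ((∑ i, dist x (y i)) ^ ((∑ i, α i) - (m : ℝ) * (n : ℝ))) ≤
      ∏ i, edist x (y i) ^ (-((n : ℝ) - α i)) := by
  have hexp : (∑ i, α i) - (m : ℝ) * (n : ℝ) = ∑ i, (-((n : ℝ) - α i)) := by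
    simp [Finset.sum_sub_distrib]
  have : Nonempty (Fin m) := ⟨⟨0, hm⟩⟩
  have hneg : ∑ i, (-((n : ℝ) - α i)) < 0 :=
    Finset.sum_neg (fun i _ => by linarith [hα i]) Finset.univ_nonempty
  have hD0 : 0 ≤ ∑ i, dist x (y i) := Finset.sum_nonneg fun i _ => dist_nonneg
  rw [hexp]
  rcases hD0.eq_or_lt with hD | hD
  · rw [← hD, Real.zero_rpow hneg.ne, ENNReal.ofReal_zero]
    exact zero_le
  · rw [Real.rpow_sum_of_pos hD, ENNReal.ofReal_prod_of_nonneg fun i _ => by positivity]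
    refine Finset.prod_le_prod' fun i _ => ?_
    rw [← ENNReal.ofReal_rpow_of_pos hD, ENNReal.rpow_neg, ENNReal.rpow_neg, ENNReal.inv_le_inv,
      edist_dist]
    refine ENNReal.rpow_le_rpow (ENNReal.ofReal_le_ofReal ?_) (by linarith [hα i])
    exact Finset.single_le_sum (f := fun i => dist x (y i)) (fun i _ => dist_nonneg)
      (Finset.mem_univ i)

/-- Pointwise domination of the multilinear operator by a product of linear fractional integrals. When
the integral defining `multIFrac` diverges its value is `0`, so the bound needs no integrability. -/
lemma multIFrac_le {m : ℕ} (hm : 1 ≤ m) {α : Fin m → ℝ} (hα : ∀ i, α i < n)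
    {f : Fin m → Eu n → ℝ} (hf : ∀ i, Measurable (f i)) (x : Eu n) :
    ENNReal.ofReal |multIFrac n m (∑ i, α i) f x| ≤
      ∏ i, fracPot (n - α i) (fun y => ENNReal.ofReal |f i y|) x := by
  rw [← Real.enorm_eq_ofReal_abs]
  unfold multIFrac fracPot
  refine (enorm_integral_le_lintegral_enorm _).trans ?_
  have hmeas : ∀ i, Measurable fun y : Eu n =>
      ENNReal.ofReal |f i y| * edist x y ^ (-((n : ℝ) - α i)) := fun i =>
    (ENNReal.measurable_ofReal.comp (continuous_abs.measurable.comp (hf i))).mul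
      ((measurable_const.edist measurable_id).pow_const _)
  rw [← lintegral_pi_prod m _ hmeas]
  refine lintegral_mono fun y => ?_
  rw [Finset.prod_mul_distrib, enorm_mul]
  refine mul_le_mul' ?_ ?_
  · rw [Real.enorm_eq_ofReal_abs, Finset.abs_prod,
      ENNReal.ofReal_prod_of_nonneg fun i _ => abs_nonneg _]
  · rw [Real.enorm_of_nonneg (Real.rpow_nonneg (Finset.sum_nonneg fun i _ => dist_nonneg) _)]
    exact kernel_le hm hα x y

/-- Hölder's inequality for a product of `m` functions, with exponents `1/q = ∑ 1/q_i`. -/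
lemma holder_prod {X : Type*} [MeasurableSpace X] {μ : Measure X} {m : ℕ} {q : ℝ} (hq : 0 < q)
    {q' : Fin m → ℝ} (hq' : ∀ i, 0 < q' i) (hsum : 1 / q = ∑ i, 1 / q' i)
    {g : Fin m → X → ℝ≥0∞} (hg : ∀ i, Measurable (g i)) :
    (∫⁻ x, (∏ i, g i x) ^ q ∂μ) ^ (1 / q) ≤ ∏ i, (∫⁻ x, g i x ^ q' i ∂μ) ^ (1 / q' i) := by
  have h := ENNReal.lintegral_prod_norm_pow_le (μ := μ) Finset.univ
    (f := fun i x => g i x ^ q' i) (fun i _ => ((hg i).pow_const _).aemeasurable)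
    (p := fun i => q / q' i)
    (by
      have : ∀ i, q / q' i = q * (1 / q' i) := fun i => by ring
      simp_rw [this, ← Finset.mul_sum, ← hsum]
      field_simp)
    (fun i _ => (div_pos hq (hq' i)).le)
  have e1 : ∀ x, ∏ i, (g i x ^ q' i) ^ (q / q' i) = (∏ i, g i x) ^ q := by
    intro x
    rw [← ENNReal.prod_rpow_of_nonneg hq.le]
    refine Finset.prod_congr rfl fun i _ => ?_
    rw [← ENNReal.rpow_mul, mul_div_cancel₀ _ (hq' i).ne']
  simp_rw [e1] at h
  refine (ENNReal.rpow_le_rpow h (by positivity)).trans_eq ?_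
  rw [← ENNReal.prod_rpow_of_nonneg (by positivity)]
  refine Finset.prod_congr rfl fun i _ => ?_
  rw [← ENNReal.rpow_mul]
  congr 1
  field_simp

end Assembly

theorem stmt0 (n m : ℕ) (hn : 1 ≤ n) (hm : 1 ≤ m)
    (α p q' : Fin m → ℝ) (hα : ∀ i, 0 < α i ∧ α i < (n : ℝ))
    (hp : ∀ i, 1 < p i ∧ p i < (n : ℝ) / α i)
    (q : ℝ) (hq : 1 / q = (∑ i, 1 / p i) - (∑ i, α i) / (n : ℝ)) (hq1 : 1 / q < 1)
    (hq' : ∀ i, 1 / q' i = 1 / p i - α i / (n : ℝ))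
    (φ : Fin m → EuclideanSpace ℝ (Fin n) → ℝ → ℝ)
    (ψ : EuclideanSpace ℝ (Fin n) → ℝ → ℝ)
    (hφm : ∀ i, Measurable (fun z : EuclideanSpace ℝ (Fin n) × ℝ => φ i z.1 z.2))
    (hφpos : ∀ i x r, 0 < r → 0 < φ i x r)
    (hψm : Measurable (fun z : EuclideanSpace ℝ (Fin n) × ℝ => ψ z.1 z.2))
    (hψpos : ∀ x r, 0 < r → 0 < ψ x r)
    (C : ℝ) (hC : 0 < C)
    (hcond : ∀ x r, 0 < r →
      (∏ i, ∫⁻ t in Set.Ioi r,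
        ENNReal.ofReal
          ((essInf (fun s => φ i x s * s ^ ((n : ℝ) / p i)) (volume.restrict (Set.Ioi t))) *
            t ^ (-((n : ℝ) / q' i) - 1))) ≤
      ENNReal.ofReal (C * ψ x r)) :
    ∃ C' > (0 : ℝ), ∀ f : Fin m → EuclideanSpace ℝ (Fin n) → ℝ,
      (∀ i, Measurable (f i)) →
      (∀ i x r, 0 < r → (∫⁻ y in ball x r, ENNReal.ofReal (|f i y| ^ p i)) < ⊤) →
      (∀ i, morreyNorm (p i) (φ i) (f i) < ⊤) →
      morreyNorm q ψ (multIFrac n m (∑ i, α i) f) ≤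
        ENNReal.ofReal C' * ∏ i, morreyNorm (p i) (φ i) (f i) := by
  have : NeZero n := ⟨by omega⟩
  have hn0 : (0 : ℝ) < n := by exact_mod_cast hn
  have : Nonempty (Fin m) := ⟨⟨0, hm⟩⟩
  have hp0 : ∀ i, 0 < p i := fun i => by linarith [(hp i).1]
  have hinv : ∀ i, 0 < 1 / q' i := by
    intro i
    rw [hq' i, sub_pos, div_lt_div_iff₀ hn0 (hp0 i)]
    have := (lt_div_iff₀ (hα i).1).1 (hp i).2
    linarith
  have hq'0 : ∀ i, 0 < q' i := fun i => one_div_pos.1 (hinv i)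
  have hq'1 : ∀ i, 1 ≤ q' i := by
    intro i
    have h1 : 1 / q' i ≤ 1 := by
      rw [hq' i]
      have h2 : 1 / p i ≤ 1 := by rw [div_le_one (hp0 i)]; exact (hp i).1.le
      have h3 : 0 < α i / n := div_pos (hα i).1 hn0
      linarith
    rwa [div_le_one (hq'0 i)] at h1
  have hqsum : 1 / q = ∑ i, 1 / q' i := by
    simp_rw [hq', Finset.sum_sub_distrib, hq, Finset.sum_div]
  have hq0 : 0 < q := by
    rw [← one_div_pos, hqsum]
    exact Finset.sum_pos (fun i _ => hinv i) Finset.univ_nonempty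
  choose c hct hc using fun i =>
    fracPot_local (n := n) (hα i).1 (hα i).2 (hp i).1 (hp i).2 (hq' i) (hq'1 i)
  set v := volume (ball (0 : Eu n) 1) with hv
  have hvt : v ≠ ⊤ := vol_unit_ne_top
  have hv0 : v ≠ 0 := vol_unit_ne_zero
  set K : ℝ≥0∞ := v⁻¹ ^ (1 / q) * (∏ i, c i) * (∏ i, v ^ (1 / p i)) * ENNReal.ofReal C with hK
  have hKt : K ≠ ⊤ := by
    refine ENNReal.mul_ne_top (ENNReal.mul_ne_top (ENNReal.mul_ne_top ?_ ?_) ?_)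
      ENNReal.ofReal_ne_top
    · exact ENNReal.rpow_ne_top_of_nonneg (by positivity) (ENNReal.inv_ne_top.2 hv0)
    · exact ENNReal.prod_ne_top fun i _ => hct i
    · exact ENNReal.prod_ne_top fun i _ =>
        ENNReal.rpow_ne_top_of_nonneg (one_div_pos.2 (hp0 i)).le hvt
  -- `+ 1` only ensures positivity of the constant
  refine ⟨K.toReal + 1, by positivity, fun f hf _ hM => ?_⟩
  have hKle : K ≤ ENNReal.ofReal (K.toReal + 1) := by
    rw [← ENNReal.ofReal_toReal hKt, ENNReal.toReal_ofReal ENNReal.toReal_nonneg]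
    exact ENNReal.ofReal_le_ofReal (by linarith)
  refine le_trans ?_ (mul_le_mul' hKle le_rfl)
  refine iSup_le fun x => iSup_le fun r => iSup_le fun hr => ?_
  set F : Fin m → Eu n → ℝ≥0∞ := fun i y => ENNReal.ofReal |f i y| with hF
  have hFm : ∀ i, Measurable (F i) := fun i =>
    ENNReal.measurable_ofReal.comp (continuous_abs.measurable.comp (hf i))
  set M : Fin m → ℝ≥0∞ := fun i => morreyNorm (p i) (φ i) (f i) with hMdef
  set E : Fin m → ℝ≥0∞ := fun i => ∫⁻ t in Set.Ioi r, ENNReal.ofReal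
    ((essInf (fun s => φ i x s * s ^ ((n : ℝ) / p i)) (volume.restrict (Set.Ioi t))) *
      t ^ (-((n : ℝ) / q' i) - 1)) with hE
  have hlocal : ∀ i, (∫⁻ z in ball x r, fracPot (n - α i) (F i) z ^ q' i) ^ (1 / q' i) ≤
      c i * (ENNReal.ofReal (r ^ ((n : ℝ) / q' i)) * (v ^ (1 / p i) * M i * E i)) := by
    intro i
    refine (hc i (F i) (hFm i) x r hr).trans (mul_le_mul' le_rfl (mul_le_mul' le_rfl ?_))
    have hAt : v ^ (1 / p i) * M i ≠ ⊤ := ENNReal.mul_ne_top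
      (ENNReal.rpow_ne_top_of_nonneg (one_div_pos.2 (hp0 i)).le hvt) (hM i).ne
    rw [hE, ← lintegral_const_mul' _ _ hAt]
    refine setLIntegral_mono' measurableSet_Ioi fun t ht => ?_
    have ht0 : 0 < t := hr.trans ht
    rw [ENNReal.ofReal_mul' (by positivity), ← mul_assoc, mul_comm]
    exact mul_le_mul' (lp_ball_le_essInf (hp0 i) (hφpos i) (hM i).ne x ht0) le_rfl
  have hr1 : ∏ i, ENNReal.ofReal (r ^ ((n : ℝ) / q' i)) = ENNReal.ofReal (r ^ ((n : ℝ) / q)) := by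
    rw [← ENNReal.ofReal_prod_of_nonneg fun i _ => by positivity, ← Real.rpow_sum_of_pos hr]
    congr 2
    rw [← mul_one_div (n : ℝ) q, hqsum, Finset.mul_sum]
    simp_rw [mul_one_div]
  have hmain : (∫⁻ z in ball x r, ENNReal.ofReal (|multIFrac n m (∑ i, α i) f z| ^ q)) ^ (1 / q) ≤
      (∏ i, c i) * ENNReal.ofReal (r ^ ((n : ℝ) / q)) * (∏ i, v ^ (1 / p i)) * (∏ i, M i) *
        ENNReal.ofReal (C * ψ x r) := by
    calc _ ≤ (∫⁻ z in ball x r, (∏ i, fracPot (n - α i) (F i) z) ^ q) ^ (1 / q) := by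
          refine ENNReal.rpow_le_rpow (lintegral_mono fun z => ?_) (by positivity)
          rw [← ENNReal.ofReal_rpow_of_nonneg (abs_nonneg _) hq0.le]
          exact ENNReal.rpow_le_rpow (multIFrac_le hm (fun i => (hα i).2) hf z) hq0.le
      _ ≤ ∏ i, (∫⁻ z in ball x r, fracPot (n - α i) (F i) z ^ q' i) ^ (1 / q' i) :=
          holder_prod hq0 hq'0 hqsum fun i => measurable_fracPot _ (hFm i)
      _ ≤ ∏ i, (c i * (ENNReal.ofReal (r ^ ((n : ℝ) / q' i)) * (v ^ (1 / p i) * M i * E i))) :=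
          Finset.prod_le_prod' fun i _ => hlocal i
      _ = (∏ i, c i) * ENNReal.ofReal (r ^ ((n : ℝ) / q)) * (∏ i, v ^ (1 / p i)) * (∏ i, M i) *
          ∏ i, E i := by
          simp only [Finset.prod_mul_distrib, hr1]; ring
      _ ≤ _ := mul_le_mul' le_rfl (hcond x r hr)
  have hV : (volume (ball x r))⁻¹ ^ (1 / q) =
      v⁻¹ ^ (1 / q) * ENNReal.ofReal ((r ^ ((n : ℝ) / q))⁻¹) := by
    have hrn : ENNReal.ofReal (r ^ n) ≠ 0 := (ENNReal.ofReal_pos.2 (by positivity)).ne'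
    rw [vol_ball x hr.le, ENNReal.mul_inv (Or.inl hrn) (Or.inl ENNReal.ofReal_ne_top),
      ENNReal.mul_rpow_of_nonneg _ _ (by positivity), mul_comm,
      ENNReal.ofReal_inv_of_pos (by positivity), ENNReal.inv_rpow (ENNReal.ofReal _),
      ENNReal.ofReal_rpow_of_pos (by positivity), ← Real.rpow_natCast, ← Real.rpow_mul hr.le,
      mul_one_div]
  have hrr : ENNReal.ofReal ((r ^ ((n : ℝ) / q))⁻¹) * ENNReal.ofReal (r ^ ((n : ℝ) / q)) = 1 := by
    rw [← ENNReal.ofReal_mul (by positivity), inv_mul_cancel₀ (by positivity), ENNReal.ofReal_one]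
  have hψψ : ENNReal.ofReal ((ψ x r)⁻¹) * ENNReal.ofReal (ψ x r) = 1 := by
    have := hψpos x r hr
    rw [← ENNReal.ofReal_mul (by positivity), inv_mul_cancel₀ this.ne', ENNReal.ofReal_one]
  rw [ENNReal.mul_rpow_of_nonneg _ _ (by positivity), hV]
  refine (mul_le_mul' le_rfl (mul_le_mul' le_rfl hmain)).trans_eq ?_
  rw [ENNReal.ofReal_mul hC.le, hK]
  calc _ = v⁻¹ ^ (1 / q) * (∏ i, c i) * (∏ i, v ^ (1 / p i)) * ENNReal.ofReal C * (∏ i, M i) *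
        (ENNReal.ofReal ((r ^ ((n : ℝ) / q))⁻¹) * ENNReal.ofReal (r ^ ((n : ℝ) / q))) *
        (ENNReal.ofReal ((ψ x r)⁻¹) * ENNReal.ofReal (ψ x r)) := by ring
    _ = _ := by rw [hrr, hψψ, mul_one, mul_one]
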